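/- Let k ≥ 2 and d > h ≥ 2 be integers and let α be a real number with α < h - 1 + (d - h + 1)/(k + 1 + (d - h - 1)·⌈k/h⌉). Then there exists a bipartite graph G = (U,V,E) in which every vertex of U has degree at most d, such that |Γ(S)| ≥ α·|S| for every subset S of U, but G does not contain an (h, hk)-matching. -/

import Mathlib

open scoped Classical

noncomputable section

variable {U V : Type*}

/-- The neighbourhood `Γ(S) ⊆ V` of a set `S` of left vertices of the bipartite
graph with edge set `E ⊆ U × V`. -/
def nbhd (E : Finset (U × V)) (S : Finset U) : Finset V :=
  (E.filter fun p => p.1 ∈ S).image Prod.snd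

/-- The neighbourhood `Γ(T) ⊆ U` of a set `T` of right vertices. -/
def nbhdR (E : Finset (U × V)) (T : Finset V) : Finset U :=
  (E.filter fun p => p.2 ∈ T).image Prod.fst

/-- The degree of a left vertex `u` in the bipartite graph with edge set `E`. -/
def degL (E : Finset (U × V)) (u : U) : ℕ := (E.filter fun p => p.1 = u).card

/-- The degree of a right vertex `v` in the bipartite graph with edge set `E`. -/
def degR (E : Finset (U × V)) (v : V) : ℕ := (E.filter fun p => p.2 = v).card

/-- The bipartite graph on the vertex set `U ⊕ V` determined by an edge set
`F ⊆ U × V`. -/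
def mkGraph (F : Finset (U × V)) : SimpleGraph (U ⊕ V) :=
  SimpleGraph.fromRel fun x y => ∃ p ∈ F, x = Sum.inl p.1 ∧ y = Sum.inr p.2

/-- The edges of `F` lying inside the connected component `c` of `mkGraph F`. -/
def componentEdges (F : Finset (U × V)) (c : (mkGraph F).ConnectedComponent) :
    Finset (U × V) :=
  F.filter fun p => (mkGraph F).connectedComponentMk (Sum.inl p.1) = c

/-- An `(s,t)`-matching in the bipartite graph `G = (U,V,E)`: a subset `F ⊆ E` such
that in `H = (U,V,F)` every connected component is a tree (i.e. `H` is acyclic) with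
at most `t` edges, and every vertex `u ∈ U` has degree exactly `s` in `H`. -/
def IsSTMatching (s t : ℕ) (E F : Finset (U × V)) : Prop :=
  F ⊆ E ∧ (mkGraph F).IsAcyclic ∧
    (∀ c : (mkGraph F).ConnectedComponent, (componentEdges F c).card ≤ t) ∧
    ∀ u : U, degL F u = s

/-!
Write `h = g + 1`, `d = h + r` and `α = g + b`. We build trees with a distinguished right vertex,
the root, which force every `h`-regular subgraph with small components to have many left vertices
in the component of the root. Expansion is certified by linear programming duality: each left
vertex spreads `α` units of weight over its neighbours so that no right vertex receives more than
one unit, and the weight already received by the root is the cost of the tree.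

Trees are joined by a new left vertex adjacent to all their roots. A new vertex of degree `h` uses
all its edges, which yields trees of size `l` and cost `b * l`. A new vertex of degree `d` may drop
`r` of its edges; give it the new root, `r` surplus trees and `h - 1` further trees as neighbours.
If the edge to the root is dropped, then a surplus tree is kept, and if that tree is large enough,
then the component of the new vertex has more than `k` left vertices. Hence cheap trees of size
`c = ⌈k / h⌉` serve as surplus trees in a tree of size `m = k + 1 - c`, and conversely. Alternating
between the two sizes lowers the cost by a fixed amount until it is `0`; a tree of cost `0` and
size `c` is then extended by `m` further left vertices.
-/

section FractionalAssignment

/-- A fractional assignment for the bipartite graph `E`: each left vertex `u` sends weight `w u v`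
along its edges, at least `α` in total, so that no right vertex receives more than one unit. It is
the dual certificate for the expansion condition `α * |S| ≤ |Γ(S)|`. -/
structure IsFractionalAssignment [Fintype U] [Fintype V] (E : Finset (U × V)) (α : ℝ)
    (w : U → V → ℝ) : Prop where
  nonneg : ∀ u v, 0 ≤ w u v
  eq_zero : ∀ u v, (u, v) ∉ E → w u v = 0
  le_sum : ∀ u, α ≤ ∑ v, w u v
  load_le_one : ∀ v, ∑ u, w u v ≤ 1

lemma mem_nbhd {E : Finset (U × V)} {S : Finset U} {v : V} :
    v ∈ nbhd E S ↔ ∃ u ∈ S, (u, v) ∈ E := by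
  simp [nbhd, and_comm]

lemma IsFractionalAssignment.mul_card_le_card_nbhd [Fintype U] [Fintype V]
    {E : Finset (U × V)} {α : ℝ} {w : U → V → ℝ} (hw : IsFractionalAssignment E α w)
    (S : Finset U) : α * S.card ≤ (nbhd E S).card := by
  have sum_eq : ∀ u ∈ S, ∑ v ∈ nbhd E S, w u v = ∑ v, w u v := fun u hu =>
    Finset.sum_subset (Finset.subset_univ _) fun v _ hv =>
      hw.eq_zero u v fun huv => hv (mem_nbhd.2 ⟨u, hu, huv⟩)
  calc α * S.card = ∑ _u ∈ S, α := by rw [Finset.sum_const, nsmul_eq_mul, mul_comm]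
    _ ≤ ∑ u ∈ S, ∑ v ∈ nbhd E S, w u v :=
      Finset.sum_le_sum fun u hu => (hw.le_sum u).trans (sum_eq u hu).ge
    _ = ∑ v ∈ nbhd E S, ∑ u ∈ S, w u v := Finset.sum_comm
    _ ≤ ∑ _v ∈ nbhd E S, (1 : ℝ) := Finset.sum_le_sum fun v _ =>
      (Finset.sum_le_univ_sum_of_nonneg fun u => hw.nonneg u v).trans (hw.load_le_one v)
    _ = (nbhd E S).card := by rw [Finset.sum_const, nsmul_eq_mul, mul_one]

end FractionalAssignment

section Components

variable {U' V' : Type*}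

lemma mkGraph_adj_of_mem {F : Finset (U × V)} {u : U} {v : V} (huv : (u, v) ∈ F) :
    (mkGraph F).Adj (Sum.inl u) (Sum.inr v) := by
  rw [mkGraph, SimpleGraph.fromRel_adj]
  exact ⟨Sum.inl_ne_inr, Or.inl ⟨(u, v), huv, rfl, rfl⟩⟩

/-- The left vertices in the connected component of `x` in the bipartite graph `F`. -/
def leftReach [Fintype U] (F : Finset (U × V)) (x : U ⊕ V) : Finset U :=
  Finset.univ.filter fun u => (mkGraph F).Reachable x (Sum.inl u)

lemma mem_leftReach [Fintype U] {F : Finset (U × V)} {x : U ⊕ V} {u : U} :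
    u ∈ leftReach F x ↔ (mkGraph F).Reachable x (Sum.inl u) := by
  simp [leftReach]

lemma leftReach_congr [Fintype U] {F : Finset (U × V)} {x y : U ⊕ V}
    (hxy : (mkGraph F).Reachable x y) : leftReach F x = leftReach F y := by
  ext u
  simp only [mem_leftReach]
  exact ⟨hxy.symm.trans, hxy.trans⟩

lemma card_componentEdges_eq_sum_degL [Fintype U] (F : Finset (U × V)) (x : U ⊕ V) :
    (componentEdges F ((mkGraph F).connectedComponentMk x)).card =
      ∑ u ∈ leftReach F x, degL F u := by
  have mem_iff (p : U × V) : p ∈ componentEdges F ((mkGraph F).connectedComponentMk x) ↔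
      p ∈ F ∧ p.1 ∈ leftReach F x := by
    simp only [componentEdges, Finset.mem_filter, SimpleGraph.ConnectedComponent.eq,
      mem_leftReach, SimpleGraph.reachable_comm]
  rw [Finset.card_eq_sum_card_fiberwise (f := Prod.fst) (t := leftReach F x)
    fun p hp => ((mem_iff p).1 hp).2]
  refine Finset.sum_congr rfl fun u hu => ?_
  rw [degL]
  congr 1
  ext p
  simp only [Finset.mem_filter, mem_iff]
  exact ⟨fun hp => ⟨hp.1.1, hp.2⟩, fun hp => ⟨⟨hp.1, hp.2 ▸ hu⟩, hp.2⟩⟩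

lemma card_nbhd_singleton (F : Finset (U × V)) (u : U) : (nbhd F {u}).card = degL F u := by
  simp only [nbhd, Finset.mem_singleton]
  refine Finset.card_image_of_injOn fun p hp q hq hpq => Prod.ext ?_ hpq
  exact (Finset.mem_filter.1 hp).2.trans (Finset.mem_filter.1 hq).2.symm

lemma mem_nbhd_singleton {F : Finset (U × V)} {u : U} {v : V} :
    v ∈ nbhd F {u} ↔ (u, v) ∈ F := by
  simp [mem_nbhd]

/-- The bipartite graph induced by `F` on `U × V` along embeddings of the vertex classes. -/
def pullback (f : U ↪ U') (g : V ↪ V') (F : Finset (U' × V')) : Finset (U × V) :=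
  F.preimage (f.prodMap g) (f.prodMap g).injective.injOn

lemma mem_pullback {f : U ↪ U'} {g : V ↪ V'} {F : Finset (U' × V')} {u : U} {v : V} :
    (u, v) ∈ pullback f g F ↔ (f u, g v) ∈ F := by
  simp [pullback]

lemma degL_pullback {f : U ↪ U'} {g : V ↪ V'} {F : Finset (U' × V')} {u : U}
    (hg : ∀ v', (f u, v') ∈ F → v' ∈ Set.range g) : degL (pullback f g F) u = degL F (f u) := by
  have hmap : nbhd F {f u} = (nbhd (pullback f g F) {u}).map g := by
    ext v'
    simp only [Finset.mem_map, mem_nbhd_singleton, mem_pullback]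
    refine ⟨fun huv => ?_, fun ⟨_, huv, hv⟩ => hv ▸ huv⟩
    obtain ⟨v, rfl⟩ := hg v' huv
    exact ⟨v, huv, rfl⟩
  rw [← card_nbhd_singleton, ← card_nbhd_singleton, hmap, Finset.card_map]

lemma reachable_of_reachable_pullback {f : U ↪ U'} {g : V ↪ V'} {F : Finset (U' × V')}
    {x y : U ⊕ V} (hxy : (mkGraph (pullback f g F)).Reachable x y) :
    (mkGraph F).Reachable (Sum.map f g x) (Sum.map f g y) := by
  refine hxy.map ⟨Sum.map f g, fun {a b} hab => ?_⟩
  rw [mkGraph, SimpleGraph.fromRel_adj] at hab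
  rcases hab with ⟨_, ⟨p, hp, rfl, rfl⟩ | ⟨p, hp, rfl, rfl⟩⟩
  · exact mkGraph_adj_of_mem (mem_pullback.1 hp)
  · exact (mkGraph_adj_of_mem (mem_pullback.1 hp)).symm

lemma card_leftReach_pullback_le [Fintype U] [Fintype U'] (f : U ↪ U') (g : V ↪ V')
    (F : Finset (U' × V')) (x : U ⊕ V) :
    (leftReach (pullback f g F) x).card ≤ (leftReach F (Sum.map f g x)).card := by
  refine Finset.card_le_card_of_injOn f (fun u hu => ?_) f.injective.injOn
  exact mem_leftReach.2 (reachable_of_reachable_pullback (mem_leftReach.1 hu))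

end Components

section Gadget

variable [Fintype U] [Fintype V] {k h d : ℕ} {α : ℝ}

/-- A rooted gadget of size `L` and cost `C`: an `α`-expanding bipartite graph `E` of maximum left
degree at most `d` with a distinguished right vertex `root` that carries weight at most `C` in some
fractional assignment. In every subgraph in which all left degrees equal `h`, the component of
`root` has at least `L` left vertices, unless some component has more than `k` of them. -/
structure IsGadget (k h d : ℕ) (α : ℝ) (L : ℕ) (C : ℝ) (E : Finset (U × V)) (root : V) :
    Prop where
  degL_le : ∀ u, degL E u ≤ d
  exists_assignment : ∃ w, IsFractionalAssignment E α w ∧ ∑ u, w u root ≤ C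
  le_or_lt : ∀ F ⊆ E, (∀ u, degL F u = h) →
    L ≤ (leftReach F (Sum.inr root)).card ∨ ∃ x, k < (leftReach F x).card

lemma IsGadget.le_or_lt_of_pullback {U' V' : Type*} [Fintype U'] {L : ℕ} {C : ℝ}
    {E : Finset (U × V)} {root : V} (hE : IsGadget k h d α L C E root) (f : U ↪ U') (g : V ↪ V')
    {F : Finset (U' × V')} (hF : ∀ u v', (f u, v') ∈ F → ∃ v, g v = v' ∧ (u, v) ∈ E)
    (hdeg : ∀ u, degL F (f u) = h) :
    L ≤ (leftReach (pullback f g F) (Sum.inr root)).card ∨ ∃ x, k < (leftReach F x).card := by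
  have hsub : pullback f g F ⊆ E := by
    rintro ⟨u, v⟩ huv
    obtain ⟨v', hv', huv'⟩ := hF u _ (mem_pullback.1 huv)
    rwa [← g.injective hv']
  have hrange : ∀ u v', (f u, v') ∈ F → v' ∈ Set.range g := fun u v' huv =>
    (hF u v' huv).imp fun _ => And.left
  exact (hE.le_or_lt _ hsub fun u => (degL_pullback (hrange u)).trans (hdeg u)).imp_right
    fun ⟨x, hx⟩ => ⟨Sum.map f g x, hx.trans_le (card_leftReach_pullback_le f g F x)⟩

/-- There is a rooted gadget of size `L` and cost `C`. Gadgets on arbitrary finite vertex types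
are covered by `IsGadget.hasGadget`. -/
def HasGadget (k h d : ℕ) (α : ℝ) (L : ℕ) (C : ℝ) : Prop :=
  ∃ (m n : ℕ) (E : Finset (Fin m × Fin n)) (root : Fin n), IsGadget k h d α L C E root

lemma IsFractionalAssignment.map_equiv {U' V' : Type*} [Fintype U'] [Fintype V']
    {E : Finset (U × V)} {w : U → V → ℝ} (hw : IsFractionalAssignment E α w)
    (e : U ≃ U') (f : V ≃ V') :
    IsFractionalAssignment (E.map (e.prodCongr f).toEmbedding) α
      fun u v => w (e.symm u) (f.symm v) where
  nonneg u v := hw.nonneg _ _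
  eq_zero u v huv := hw.eq_zero _ _ (by simpa [Finset.mem_map_equiv] using huv)
  le_sum u := (hw.le_sum (e.symm u)).trans_eq (f.symm.sum_comp fun v => w (e.symm u) v).symm
  load_le_one v := (e.symm.sum_comp fun u => w u (f.symm v)).trans_le (hw.load_le_one (f.symm v))

lemma IsGadget.hasGadget {L : ℕ} {C : ℝ} {E : Finset (U × V)} {root : V}
    (hE : IsGadget k h d α L C E root) : HasGadget k h d α L C := by
  let e := Fintype.equivFin U
  let f := Fintype.equivFin V
  have hmem : ∀ u v, (u, v) ∈ E.map (e.prodCongr f).toEmbedding ↔ (e.symm u, f.symm v) ∈ E := by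
    simp [Finset.mem_map_equiv]
  refine ⟨_, _, E.map (e.prodCongr f).toEmbedding, f root, fun u => ?_, ?_, fun F hF hdeg => ?_⟩
  · have hpull : pullback e.symm.toEmbedding f.symm.toEmbedding E =
        E.map (e.prodCongr f).toEmbedding := by
      ext ⟨u, v⟩
      rw [mem_pullback, hmem]
      rfl
    rw [← hpull, degL_pullback (g := f.symm.toEmbedding) fun v _ => f.symm.surjective v]
    exact hE.degL_le _
  · obtain ⟨w, hw, hroot⟩ := hE.exists_assignment
    refine ⟨_, hw.map_equiv e f, ?_⟩
    rw [f.symm_apply_apply]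
    exact (e.symm.sum_comp fun u => w u root).trans_le hroot
  · refine (hE.le_or_lt_of_pullback e.toEmbedding f.toEmbedding (fun u v' huv => ?_)
      fun u => hdeg _).imp_left fun hL => hL.trans (card_leftReach_pullback_le _ _ _ _)
    exact ⟨f.symm v', f.apply_symm_apply v', by simpa using (hmem _ _).1 (hF huv)⟩

lemma HasGadget.mono {L : ℕ} {C C' : ℝ} (hG : HasGadget k h d α L C) (hC : C ≤ C') :
    HasGadget k h d α L C' := by
  obtain ⟨m, n, E, root, hE⟩ := hG
  obtain ⟨w, hw, hroot⟩ := hE.exists_assignment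
  exact ⟨m, n, E, root, hE.degL_le, ⟨w, hw, hroot.trans hC⟩, hE.le_or_lt⟩

lemma hasGadget_zero : HasGadget k h d α 0 0 :=
  ⟨0, 1, ∅, 0, fun u => u.elim0,
    ⟨0, ⟨fun _ _ => le_rfl, fun _ _ _ => rfl, fun u => u.elim0, by simp⟩, by simp⟩,
    fun _ _ _ => Or.inl (Nat.zero_le _)⟩

end Gadget

section Join

variable {ι : Type*} [Fintype ι] {U V : ι → Type*}
  {E : ∀ i, Finset (U i × V i)} {root : ∀ i, V i}

/-- The disjoint union of the bipartite graphs `E i` together with a new left vertex `none` that is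
adjacent to all their roots. -/
def joinEdges (E : ∀ i, Finset (U i × V i)) (root : ∀ i, V i) :
    Finset (Option (Σ i, U i) × Σ i, V i) :=
  (Finset.univ.image fun i => (none, ⟨i, root i⟩)) ∪
    Finset.univ.biUnion fun i => (E i).image fun p => (some ⟨i, p.1⟩, ⟨i, p.2⟩)

lemma none_mem_joinEdges {x : Σ i, V i} : (none, x) ∈ joinEdges E root ↔ ∃ i, ⟨i, root i⟩ = x := by
  simp [joinEdges]

lemma some_mem_joinEdges {i : ι} {u : U i} {x : Σ i, V i} :
    (some ⟨i, u⟩, x) ∈ joinEdges E root ↔ ∃ v, ⟨i, v⟩ = x ∧ (u, v) ∈ E i := by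
  simp only [joinEdges, Finset.mem_union, Finset.mem_image, Finset.mem_biUnion, Finset.mem_univ,
    true_and, Prod.mk.injEq, reduceCtorEq, false_and, exists_false, false_or, Option.some.injEq]
  constructor
  · rintro ⟨j, ⟨u', v⟩, huv, hu, rfl⟩
    cases hu
    exact ⟨v, rfl, huv⟩
  · rintro ⟨v, rfl, huv⟩
    exact ⟨i, (u, v), huv, rfl, rfl⟩

/-- The embedding of the right vertices of the `i`-th graph into those of the join. -/
def joinInr (i : ι) : V i ↪ Σ i, V i := Function.Embedding.sigmaMk i

/-- The embedding of the left vertices of the `i`-th graph into those of the join. -/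
def joinInl (i : ι) : U i ↪ Option (Σ i, U i) :=
  (Function.Embedding.sigmaMk i).trans Function.Embedding.some

/-- The roots of the joined graphs as right vertices of the join. -/
def joinRoot (root : ∀ i, V i) : ι ↪ Σ i, V i :=
  ⟨fun i => ⟨i, root i⟩, fun _ _ hij => congrArg Sigma.fst hij⟩

lemma degL_none_of_subset_joinEdges {F : Finset (Option (Σ i, U i) × Σ i, V i)}
    (hF : F ⊆ joinEdges E root) {T : Finset ι} (hT : ∀ i, i ∈ T ↔ (none, joinRoot root i) ∈ F) :
    degL F none = T.card := by
  have hmap : nbhd F {none} = T.map (joinRoot root) := by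
    ext x
    simp only [Finset.mem_map, mem_nbhd_singleton, hT]
    refine ⟨fun hx => ?_, fun ⟨_, hi, hix⟩ => hix ▸ hi⟩
    obtain ⟨i, rfl⟩ := none_mem_joinEdges.1 (hF hx)
    exact ⟨i, hx, rfl⟩
  rw [← card_nbhd_singleton, hmap, Finset.card_map]

lemma degL_joinEdges_some (i : ι) (u : U i) :
    degL (joinEdges E root) (some ⟨i, u⟩) = degL (E i) u := by
  have hpull : pullback (joinInl i) (joinInr i) (joinEdges E root) = E i := by
    ext ⟨u, v⟩
    refine mem_pullback.trans (some_mem_joinEdges.trans ⟨?_, fun huv => ⟨v, rfl, huv⟩⟩)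
    rintro ⟨v', hv', huv⟩
    rwa [← (joinInr i).injective hv']
  rw [← hpull]
  refine (degL_pullback (f := joinInl i) fun x hx => ?_).symm
  exact (some_mem_joinEdges.1 hx).imp fun _ => And.left

/-- The weights on a join: `w i` inside the `i`-th graph and `ℓ i` on the new edge to its root. -/
def joinWeight (root : ∀ i, V i) (w : ∀ i, U i → V i → ℝ) (ℓ : ι → ℝ) :
    Option (Σ i, U i) → (Σ i, V i) → ℝ
  | none => Function.extend (joinRoot root) ℓ 0
  | some ⟨i, u⟩ => Function.extend (joinInr i) (w i u) 0

lemma sum_extend_zero {α β : Type*} [Fintype α] [Fintype β] (f : α ↪ β) (g : α → ℝ) :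
    ∑ b, Function.extend f g 0 b = ∑ a, g a :=
  (Fintype.sum_of_injective f f.injective g _ (fun b hb => Function.extend_apply' g _ b hb)
    fun a => (f.injective.extend_apply g _ a).symm).symm

lemma extend_zero_nonneg {α β : Type*} (f : α ↪ β) {g : α → ℝ} (hg : ∀ a, 0 ≤ g a) (b : β) :
    0 ≤ Function.extend f g 0 b := by
  by_cases hb : ∃ a, f a = b
  · obtain ⟨a, rfl⟩ := hb
    exact (hg a).trans_eq (f.injective.extend_apply g _ a).symm
  · exact (Function.extend_apply' g (0 : β → ℝ) b hb).ge

variable [∀ i, Fintype (U i)]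

lemma one_add_sum_le_card_leftReach_none {F : Finset (Option (Σ i, U i) × Σ i, V i)}
    {T : Finset ι} (hT : ∀ i ∈ T, (none, joinRoot root i) ∈ F) :
    1 + ∑ i ∈ T, (leftReach (pullback (joinInl i) (joinInr i) F) (Sum.inr (root i))).card ≤
      (leftReach F (Sum.inl none)).card := by
  rw [← Finset.card_sigma, add_comm, ← Finset.card_insertNone]
  refine Finset.card_le_card fun u hu => mem_leftReach.2 ?_
  rcases u with _ | ⟨i, u⟩
  · exact .rfl
  · obtain ⟨hi, hu⟩ := Finset.mem_sigma.1 (Finset.some_mem_insertNone.1 hu)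
    exact (mkGraph_adj_of_mem (hT i hi)).reachable.trans
      (reachable_of_reachable_pullback (mem_leftReach.1 hu))

lemma sum_joinWeight_left (w : ∀ i, U i → V i → ℝ) (ℓ : ι → ℝ) (i : ι) (v : V i) :
    ∑ u, joinWeight root w ℓ u ⟨i, v⟩ = (if v = root i then ℓ i else 0) + ∑ u, w i u v := by
  rw [Fintype.sum_option, Fintype.sum_sigma, Fintype.sum_eq_single i]
  · congr 1
    · split_ifs with hv
      · subst hv
        exact (joinRoot root).injective.extend_apply ℓ _ i
      · refine Function.extend_apply' ℓ _ _ ?_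
        rintro ⟨j, hj⟩
        cases hj
        exact hv rfl
    · exact Finset.sum_congr rfl fun u _ => (joinInr i).injective.extend_apply (w i u) _ v
  · intro j hj
    refine Finset.sum_eq_zero fun u _ => Function.extend_apply' (w j u) _ _ ?_
    rintro ⟨v', hv'⟩
    exact hj (congrArg Sigma.fst hv')

variable [∀ i, Fintype (V i)]

lemma isFractionalAssignment_joinWeight {α : ℝ} {C : ι → ℝ} {w : ∀ i, U i → V i → ℝ}
    (hw : ∀ i, IsFractionalAssignment (E i) α (w i)) (hroot : ∀ i, ∑ u, w i u (root i) ≤ C i)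
    {ℓ : ι → ℝ} (hℓ : ∀ i, 0 ≤ ℓ i) (hCℓ : ∀ i, C i + ℓ i ≤ 1) (hα : α ≤ ∑ i, ℓ i) :
    IsFractionalAssignment (joinEdges E root) α (joinWeight root w ℓ) where
  nonneg
    | none => extend_zero_nonneg _ hℓ
    | some ⟨i, u⟩ => extend_zero_nonneg _ ((hw i).nonneg u)
  eq_zero
    | none, x, hx => Function.extend_apply' ℓ _ x fun hi => hx (none_mem_joinEdges.2 hi)
    | some ⟨i, u⟩, x, hx => by
      by_cases hv : ∃ v, joinInr i v = x
      · obtain ⟨v, rfl⟩ := hv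
        refine ((joinInr i).injective.extend_apply (w i u) _ v).trans ((hw i).eq_zero u v ?_)
        exact fun huv => hx (some_mem_joinEdges.2 ⟨v, rfl, huv⟩)
      · exact Function.extend_apply' (w i u) _ x hv
  le_sum
    | none => hα.trans_eq (sum_extend_zero _ _).symm
    | some ⟨i, u⟩ => ((hw i).le_sum u).trans_eq (sum_extend_zero _ _).symm
  load_le_one := by
    rintro ⟨i, v⟩
    rw [sum_joinWeight_left]
    split_ifs with hv
    · subst hv
      linarith [hroot i, hCℓ i]
    · linarith [(hw i).load_le_one v]

lemma IsGadget.join {k h d L' : ℕ} {α : ℝ} {L : ι → ℕ} {C : ι → ℝ}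
    (hE : ∀ i, IsGadget k h d α (L i) (C i) (E i) (root i)) (hd : Fintype.card ι ≤ d)
    {ℓ : ι → ℝ} (hℓ : ∀ i, 0 ≤ ℓ i) (hCℓ : ∀ i, C i + ℓ i ≤ 1) (hα : α ≤ ∑ i, ℓ i) (i₀ : ι)
    (hmem : ∀ T : Finset ι, T.card = h → i₀ ∈ T → L' ≤ 1 + ∑ i ∈ T, L i)
    (hnotMem : ∀ T : Finset ι, T.card = h → i₀ ∉ T → k ≤ ∑ i ∈ T, L i) :
    IsGadget k h d α L' (C i₀ + ℓ i₀) (joinEdges E root) (joinRoot root i₀) where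
  degL_le
    | none => (degL_none_of_subset_joinEdges subset_rfl (T := Finset.univ) fun i =>
        iff_of_true (Finset.mem_univ i) (none_mem_joinEdges.2 ⟨i, rfl⟩)).trans_le hd
    | some ⟨i, u⟩ => (degL_joinEdges_some i u).trans_le ((hE i).degL_le u)
  exists_assignment := by
    choose w hw hroot using fun i => (hE i).exists_assignment
    refine ⟨_, isFractionalAssignment_joinWeight hw hroot hℓ hCℓ hα, ?_⟩
    refine (sum_joinWeight_left w ℓ i₀ (root i₀)).trans_le ?_
    rw [if_pos rfl, add_comm]
    gcongr
    exact hroot i₀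
  le_or_lt F hF hdeg := by
    refine or_iff_not_imp_right.2 fun hsmall => ?_
    set T := Finset.univ.filter fun i => (none, joinRoot root i) ∈ F with hTdef
    have hT : ∀ i, i ∈ T ↔ (none, joinRoot root i) ∈ F := by simp [hTdef]
    have hcard : T.card = h := (degL_none_of_subset_joinEdges hF hT).symm.trans (hdeg none)
    have hL (i) : L i ≤
        (leftReach (pullback (joinInl i) (joinInr i) F) (Sum.inr (root i))).card :=
      ((hE i).le_or_lt_of_pullback (joinInl i) (joinInr i)
        (fun _ _ huv => some_mem_joinEdges.1 (hF huv)) fun _ => hdeg _).resolve_right hsmall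
    have hreach : 1 + ∑ i ∈ T, L i ≤ (leftReach F (Sum.inl none)).card :=
      (Nat.add_le_add_left (Finset.sum_le_sum fun i _ => hL i) 1).trans
        (one_add_sum_le_card_leftReach_none fun i => (hT i).1)
    by_cases hi₀ : i₀ ∈ T
    · rw [leftReach_congr (mkGraph_adj_of_mem ((hT i₀).1 hi₀)).symm.reachable]
      exact (hmem T hcard hi₀).trans hreach
    · have := hnotMem T hcard hi₀
      exact absurd ⟨Sum.inl none, by omega⟩ hsmall

end Join

section Constructions

lemma HasGadget.join {ι : Type*} [Fintype ι] {k h d L' : ℕ} {α : ℝ} {L : ι → ℕ} {C : ι → ℝ}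
    (hG : ∀ i, HasGadget k h d α (L i) (C i)) (hd : Fintype.card ι ≤ d)
    {ℓ : ι → ℝ} (hℓ : ∀ i, 0 ≤ ℓ i) (hCℓ : ∀ i, C i + ℓ i ≤ 1) (hα : α ≤ ∑ i, ℓ i) (i₀ : ι)
    (hmem : ∀ T : Finset ι, T.card = h → i₀ ∈ T → L' ≤ 1 + ∑ i ∈ T, L i)
    (hnotMem : ∀ T : Finset ι, T.card = h → i₀ ∉ T → k ≤ ∑ i ∈ T, L i) :
    HasGadget k h d α L' (C i₀ + ℓ i₀) := by
  choose m n E root hE using hG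
  exact (IsGadget.join hE hd hℓ hCℓ hα i₀ hmem hnotMem).hasGadget

lemma sum_univ_le_sum_add_mul {ι : Type*} [Fintype ι] {L : ι → ℕ} {B n : ℕ} {T : Finset ι}
    (hn : Fintype.card ι = T.card + n) (hL : ∀ i ∉ T, L i ≤ B) :
    ∑ i, L i ≤ ∑ i ∈ T, L i + n * B := by
  have hcompl : Tᶜ.card = n := by rw [Finset.card_compl, hn, Nat.add_sub_cancel_left]
  rw [← Finset.sum_add_sum_compl T L, ← hcompl]
  gcongr
  exact Finset.sum_le_card_nsmul _ _ _ fun i hi => hL i (Finset.mem_compl.1 hi)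

lemma HasGadget.join_of_size_le {ι : Type*} [Fintype ι] {k h r L' B : ℕ} {α : ℝ} {L : ι → ℕ}
    {C : ι → ℝ} (hG : ∀ i, HasGadget k h (h + r) α (L i) (C i)) (hcard : Fintype.card ι = h + r)
    {ℓ : ι → ℝ} (hℓ : ∀ i, 0 ≤ ℓ i) (hCℓ : ∀ i, C i + ℓ i ≤ 1) (hα : α ≤ ∑ i, ℓ i) (i₀ : ι)
    (hB : ∀ i ≠ i₀, L i ≤ B) (hL' : L' + r * B ≤ 1 + ∑ i, L i)
    (hk : k + L i₀ + r * B ≤ ∑ i, L i + B) : HasGadget k h (h + r) α L' (C i₀ + ℓ i₀) := by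
  have hBT {T : Finset ι} (hi₀ : i₀ ∈ T) : ∀ i ∉ T, L i ≤ B := fun i hi =>
    hB i fun hii₀ => hi (hii₀ ▸ hi₀)
  refine HasGadget.join hG hcard.le hℓ hCℓ hα i₀ (fun T hT hmem => ?_) (fun T hT hnotMem => ?_)
  · have hsum := sum_univ_le_sum_add_mul (hcard.trans (by rw [hT])) (hBT hmem)
    omega
  · have hTcard := Finset.card_insert_of_notMem hnotMem
    have hTuniv := Finset.card_le_univ (insert i₀ T)
    obtain ⟨q, rfl⟩ : ∃ q, r = q + 1 := ⟨r - 1, by omega⟩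
    have hsum := sum_univ_le_sum_add_mul (n := q) (by omega) (hBT (Finset.mem_insert_self i₀ T))
    rw [Finset.sum_insert hnotMem] at hsum
    rw [Nat.succ_mul] at hk
    omega

variable {k g r c : ℕ} {b : ℝ}

lemma hasGadget_path (hb : 0 ≤ b) {l : ℕ} (hl : b * l ≤ 1) :
    HasGadget k (g + 1) (g + 1 + r) (g + b) l (b * l) := by
  induction l with
  | zero => simpa using hasGadget_zero
  | succ l ih =>
    rw [Nat.cast_succ, mul_add, mul_one] at hl ⊢
    have heq_univ {T : Finset (Fin (g + 1))} (hT : T.card = g + 1) : T = Finset.univ :=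
      Finset.eq_univ_of_card T (by simpa using hT)
    let L : Fin (g + 1) → ℕ := Fin.cons l fun _ => 0
    let C : Fin (g + 1) → ℝ := Fin.cons (b * l) fun _ => 0
    let load : Fin (g + 1) → ℝ := Fin.cons b fun _ => 1
    have hG : ∀ i, HasGadget k (g + 1) (g + 1 + r) (g + b) (L i) (C i) :=
      Fin.cases (ih (by linarith)) fun _ => hasGadget_zero
    have hload : ∀ i, 0 ≤ load i := Fin.cases hb fun _ => zero_le_one
    have hCload : ∀ i, C i + load i ≤ 1 := Fin.cases hl fun _ => (zero_add _).le
    refine HasGadget.join hG (by simp) hload hCload ?_ 0 (fun T hT _ => ?_) (fun T hT hmem => ?_)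
    · simp [load, Fin.sum_univ_succ, add_comm]
    · simp [L, heq_univ hT, Fin.sum_univ_succ, add_comm]
    · simp [heq_univ hT] at hmem

lemma exists_sum_eq_of_le_mul {n M c : ℕ} (hM : M ≤ n * c) :
    ∃ s : Fin n → ℕ, (∀ i, s i ≤ c) ∧ ∑ i, s i = M := by
  induction n generalizing M with
  | zero => exact ⟨0, fun i => i.elim0, by simpa [eq_comm] using hM⟩
  | succ n ih =>
    rw [Nat.succ_mul] at hM
    obtain ⟨s, hs, hsum⟩ := ih (M := M - min M c) (by omega)
    refine ⟨Fin.cons (min M c) s, Fin.cases (min_le_right M c) hs, ?_⟩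
    rw [Fin.sum_cons, hsum]
    omega

/-- The new left vertex carries the gadget of size `L₀`, whose root stays the root, `r` surplus
gadgets of size `B`, and `g` paths of total size `x - 1`. Dropping `r` of its edges leaves at least
the paths if the edge to the root is kept, and the paths and a surplus gadget otherwise. -/
lemma HasGadget.extend (hb : 0 ≤ b) (hc : b * c ≤ 1) {L₀ B x : ℕ} {C₀ CB ℓ : ℝ}
    (hG₀ : HasGadget k (g + 1) (g + 1 + r) (g + b) L₀ C₀)
    (hGB : HasGadget k (g + 1) (g + 1 + r) (g + b) B CB)
    (hx : x ≤ g * c + 1) (hcB : c ≤ B) (hk : k + 1 ≤ x + B) (hCB : CB ≤ 1) (hℓ : 0 ≤ ℓ)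
    (hCℓ : C₀ + ℓ ≤ 1) (hload : b * x ≤ ℓ + r * (1 - CB)) :
    HasGadget k (g + 1) (g + 1 + r) (g + b) (L₀ + x) (C₀ + ℓ) := by
  rcases x with _ | M
  · exact hG₀.mono (le_add_of_nonneg_right hℓ)
  obtain ⟨s, hsc, hsM⟩ := exists_sum_eq_of_le_mul (Nat.le_of_succ_le_succ hx)
  have hbs (j) : b * s j ≤ 1 :=
    (mul_le_mul_of_nonneg_left (Nat.cast_le.2 (hsc j)) hb).trans hc
  let L : Option (Fin r ⊕ Fin g) → ℕ := fun i => i.elim L₀ (Sum.elim (fun _ => B) s)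
  let C : Option (Fin r ⊕ Fin g) → ℝ := fun i => i.elim C₀ (Sum.elim (fun _ => CB) fun j => b * s j)
  let load : Option (Fin r ⊕ Fin g) → ℝ :=
    fun i => i.elim ℓ (Sum.elim (fun _ => 1 - CB) fun j => 1 - b * s j)
  have hcard : Fintype.card (Option (Fin r ⊕ Fin g)) = g + 1 + r := by simp; omega
  have hsumL : ∑ i, L i = L₀ + (r * B + M) := by simp [L, hsM]
  have hsumload : ∑ i, load i = ℓ + (r * (1 - CB) + (g - b * M)) := by
    simp [load, ← Finset.mul_sum, ← hsM, mul_sub]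
  refine HasGadget.join_of_size_le (L := L) (C := C) (ℓ := load) (B := B) ?_ hcard ?_ ?_ ?_ none
    ?_ ?_ ?_
  · rintro (_ | _ | j)
    exacts [hG₀, hGB, hasGadget_path hb (hbs j)]
  · rintro (_ | _ | j)
    exacts [hℓ, sub_nonneg.2 hCB, sub_nonneg.2 (hbs j)]
  · rintro (_ | _ | j)
    exacts [hCℓ, (add_sub_cancel _ _).le, (add_sub_cancel _ _).le]
  · push_cast at hload
    linarith
  · rintro (_ | _ | j) hi
    exacts [absurd rfl hi, le_rfl, (hsc j).trans hcB]
  · omega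
  · rw [show L none = L₀ from rfl]
    omega

lemma HasGadget.exchange (hb : 0 ≤ b) (hc : b * c ≤ 1) {x y : ℕ} {C : ℝ}
    (hG : HasGadget k (g + 1) (g + 1 + r) (g + b) y C) (hx : x ≤ g * c + 1) (hcy : c ≤ y)
    (hk : k + 1 ≤ x + y) (hC : C ≤ 1) (hload : b * x ≤ 1 + r * (1 - C)) :
    HasGadget k (g + 1) (g + 1 + r) (g + b) x (max 0 (b * x - r * (1 - C))) := by
  have hG' := hasGadget_zero.extend hb hc hG hx hcy hk hC
    (le_max_left 0 (b * x - r * (1 - C))) (by rw [zero_add]; exact max_le zero_le_one (by linarith))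
    (by linarith [le_max_right 0 (b * x - r * (1 - C))])
  rwa [zero_add, zero_add] at hG'

variable {m : ℕ}

lemma HasGadget.reduce_cost (hb : 0 ≤ b) (hg : 1 ≤ g) (hr : 1 ≤ r) (hcm : c ≤ m)
    (hk : k + 1 = c + m) (hm : m ≤ g * c + 1) (hc : b * c ≤ 1) (hgap : b * (m + r * c) ≤ r + 1)
    {p : ℝ} (hp : p ≤ b * c) (hG : HasGadget k (g + 1) (g + 1 + r) (g + b) c p) :
    HasGadget k (g + 1) (g + 1 + r) (g + b) c (max 0 (p - (r + 1 - b * (m + r * c)))) := by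
  have hr' : (1 : ℝ) ≤ r := Nat.one_le_cast.2 hr
  have hrp : r * p ≤ r * (b * c) := by gcongr
  have hcg : c ≤ g * c + 1 := (Nat.le_mul_of_pos_left c hg).trans (Nat.le_succ _)
  have hGm := hG.exchange hb hc hm le_rfl (by omega) (hp.trans hc) (by linarith)
  have hGc := hGm.exchange hb hc hcg hcm hk.le (max_le zero_le_one (by linarith)) ?_
  · refine hGc.mono (max_le (le_max_left _ _) ?_)
    rcases le_total (b * m - r * (1 - p)) 0 with hneg | hpos
    · rw [max_eq_left hneg]
      exact le_max_of_le_left (by linarith)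
    · rw [max_eq_right hpos]
      refine le_max_of_le_right ?_
      have hδ : 0 ≤ r + 1 - b * (m + r * c) := by linarith
      calc b * c - r * (1 - (b * m - r * (1 - p)))
          = p - (r + 1 - b * (m + r * c)) - (r - 1) * (r + 1 - b * (m + r * c))
            - (r - 1) * (r + 1) * (b * c - p) := by ring
        _ ≤ p - (r + 1 - b * (m + r * c)) := by
          have := mul_nonneg (sub_nonneg.2 hr') hδ
          have : 0 ≤ ((r : ℝ) - 1) * (r + 1) * (b * c - p) :=
            mul_nonneg (mul_nonneg (sub_nonneg.2 hr') (by linarith)) (sub_nonneg.2 hp)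
          linarith
  · have : 0 ≤ r * (1 - max 0 (b * m - r * (1 - p))) :=
      mul_nonneg (by linarith) (sub_nonneg.2 (max_le zero_le_one (by linarith)))
    linarith

lemma hasGadget_cost_zero (hb : 0 ≤ b) (hg : 1 ≤ g) (hr : 1 ≤ r) (hcm : c ≤ m)
    (hk : k + 1 = c + m) (hm : m ≤ g * c + 1) (hc : b * c ≤ 1) (hgap : b * (m + r * c) < r + 1) :
    HasGadget k (g + 1) (g + 1 + r) (g + b) c 0 := by
  set δ : ℝ := r + 1 - b * (m + r * c) with hδdef
  have hδ : 0 < δ := sub_pos.2 hgap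
  have hbc : 0 ≤ b * c := by positivity
  have hiter (n : ℕ) : HasGadget k (g + 1) (g + 1 + r) (g + b) c (max 0 (b * c - n * δ)) := by
    induction n with
    | zero => exact (hasGadget_path hb hc).mono (by simp)
    | succ n ih =>
      have hle : max 0 (b * c - n * δ) ≤ b * c :=
        max_le hbc (sub_le_self _ (by positivity))
      refine (ih.reduce_cost hb hg hr hcm hk hm hc hgap.le hle).mono ?_
      rw [← hδdef]
      push_cast
      refine max_le (le_max_left _ _) (sub_le_iff_le_add.2 (max_le ?_ ?_))
      · linarith [le_max_left 0 (b * c - (n + 1) * δ)]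
      · linarith [le_max_right 0 (b * c - (n + 1) * δ)]
  obtain ⟨n, hn⟩ := exists_nat_ge (b * c / δ)
  refine (hiter n).mono (max_le le_rfl ?_)
  linarith [(div_le_iff₀ hδ).1 hn]

lemma hasGadget_size_succ (hb : 0 ≤ b) (hg : 1 ≤ g) (hr : 1 ≤ r) (hcm : c ≤ m)
    (hk : k + 1 = c + m) (hm : m ≤ g * c + 1) (hgap : b * (m + r * c) < r + 1) :
    HasGadget k (g + 1) (g + 1 + r) (g + b) (k + 1) 1 := by
  have hc : b * c ≤ 1 := by
    have hr' : (0 : ℝ) < r + 1 := by positivity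
    refine le_of_mul_le_mul_right ?_ hr'
    calc b * c * (r + 1) = b * (c + r * c) := by ring
      _ ≤ b * (m + r * c) := by gcongr
      _ ≤ 1 * (r + 1) := by rw [one_mul]; exact hgap.le
  have hload : b * m ≤ 1 + r * (1 - 0) := by
    have hrc : 0 ≤ b * (r * c) := by positivity
    linarith
  have hG := hasGadget_cost_zero hb hg hr hcm hk hm hc hgap
  have hG' := hG.extend hb hc hG hm le_rfl (by omega) zero_le_one zero_le_one
    (zero_add 1).le hload
  rwa [zero_add, ← hk] at hG'

end Constructions

lemma HasGadget.exists_expanding_with_large_component {k h d : ℕ} {α C : ℝ} (hh : 0 < h)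
    (hG : HasGadget k h d α (k + 1) C) :
    ∃ (m n : ℕ) (E : Finset (Fin m × Fin n)),
      (∀ u : Fin m, degL E u ≤ d) ∧
      (∀ S : Finset (Fin m), α * S.card ≤ ((nbhd E S).card : ℝ)) ∧
      ∀ F ⊆ E, (∀ u, degL F u = h) → ∃ c, h * k < (componentEdges F c).card := by
  obtain ⟨m, n, E, root, hE⟩ := hG
  obtain ⟨w, hw, -⟩ := hE.exists_assignment
  refine ⟨m, n, E, hE.degL_le, hw.mul_card_le_card_nbhd, fun F hF hdeg => ?_⟩
  obtain ⟨x, hx⟩ : ∃ x, k < (leftReach F x).card :=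
    (hE.le_or_lt F hF hdeg).elim (fun hroot => ⟨_, hroot⟩) id
  refine ⟨(mkGraph F).connectedComponentMk x, ?_⟩
  rw [card_componentEdges_eq_sum_degL, Finset.sum_congr rfl fun u _ => hdeg u, Finset.sum_const,
    smul_eq_mul, mul_comm]
  exact Nat.mul_lt_mul_of_pos_right hx hh

lemma le_mul_ceil_div {k h : ℕ} (hh : 0 < h) : k ≤ h * ⌈(k : ℝ) / h⌉₊ := by
  have := (div_le_iff₀' (Nat.cast_pos.2 hh)).1 (Nat.le_ceil ((k : ℝ) / h))
  exact_mod_cast this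

lemma two_mul_ceil_div_le {k h : ℕ} (hh : 2 ≤ h) : 2 * ⌈(k : ℝ) / h⌉₊ ≤ k + 1 := by
  have hceil : ⌈(k : ℝ) / h⌉₊ ≤ (k + 1) / 2 := by
    rw [Nat.ceil_le, div_le_iff₀ (Nat.cast_pos.2 (by omega))]
    have : k ≤ (k + 1) / 2 * h := by
      have := Nat.mul_le_mul_left ((k + 1) / 2) hh
      omega
    exact_mod_cast this
  omega

theorem stmt_3_general (k h d : ℕ) (hh : 2 ≤ h) (hd : h < d) (α : ℝ)
    (hα : α < (h : ℝ) - 1 +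
        ((d : ℝ) - h + 1) /
          ((k : ℝ) + 1 + ((d : ℝ) - h - 1) * (Nat.ceil ((k : ℝ) / (h : ℝ)) : ℝ))) :
    ∃ (m n : ℕ) (E : Finset (Fin m × Fin n)),
      (∀ u : Fin m, degL E u ≤ d) ∧
      (∀ S : Finset (Fin m), α * S.card ≤ ((nbhd E S).card : ℝ)) ∧
      ∀ F ⊆ E, (∀ u, degL F u = h) → ∃ c, h * k < (componentEdges F c).card := by
  have hkc := le_mul_ceil_div (k := k) (show 0 < h by omega)
  have hck := two_mul_ceil_div_le (k := k) hh
  set c := ⌈(k : ℝ) / h⌉₊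
  obtain ⟨g, rfl⟩ : ∃ g, h = g + 1 := ⟨h - 1, by omega⟩
  obtain ⟨r, rfl⟩ : ∃ r, d = g + 1 + r := ⟨d - (g + 1), by omega⟩
  obtain ⟨m, hm⟩ : ∃ m, k + 1 = c + m := ⟨k + 1 - c, by omega⟩
  have hm' : (k : ℝ) + 1 = c + m := by exact_mod_cast hm
  have hD : (0 : ℝ) < m + r * c := by
    have : 0 < m := by omega
    positivity
  have hα' : α - g < (r + 1) / (m + r * c) := by
    refine sub_lt_iff_lt_add'.2 (hα.trans_eq ?_)
    push_cast
    rw [hm']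
    ring
  have hb : max 0 (α - g) * (m + r * c) < r + 1 :=
    (lt_div_iff₀ hD).1 (max_lt (by positivity) hα')
  have hmc : m ≤ g * c + 1 := by
    rw [add_mul] at hkc
    omega
  have hG : HasGadget k (g + 1) (g + 1 + r) (g + max 0 (α - g)) (k + 1) 1 :=
    hasGadget_size_succ (le_max_left _ _) (by omega) (by omega) (by omega) hm hmc hb
  obtain ⟨a, n, E, hdeg, hexp, hF⟩ := hG.exists_expanding_with_large_component g.succ_pos
  refine ⟨a, n, E, hdeg, fun S => le_trans ?_ (hexp S), hF⟩
  gcongr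
  linarith [le_max_right 0 (α - g)]

/-- **Proposition 4 (optimality).** Let `k ≥ 2`, `d > h ≥ 2` and
`α < h − 1 + (d − h + 1)/(k + 1 + (d − h − 1)·⌈k/h⌉)`. Then there is a bipartite
graph `G` with maximum left degree at most `d` satisfying the `α`-neighbourhood
condition which contains no `(h, hk)`-matching. -/
theorem stmt_3 (k h d : ℕ) (hk : 2 ≤ k) (hh : 2 ≤ h) (hd : h < d) (α : ℝ)
    (hα : α < (h : ℝ) - 1 +
        ((d : ℝ) - h + 1) /
          ((k : ℝ) + 1 + ((d : ℝ) - h - 1) * (Nat.ceil ((k : ℝ) / (h : ℝ)) : ℝ))) :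
    ∃ (m n : ℕ) (E : Finset (Fin m × Fin n)),
      (∀ u : Fin m, degL E u ≤ d) ∧
      (∀ S : Finset (Fin m), α * S.card ≤ ((nbhd E S).card : ℝ)) ∧
      ¬ ∃ F : Finset (Fin m × Fin n), IsSTMatching h (h * k) E F := by
  obtain ⟨m, n, E, hdeg, hexp, hlarge⟩ := stmt_3_general k h d hh hd α hα
  refine ⟨m, n, E, hdeg, hexp, fun ⟨F, hFE, _, hsmall, hregular⟩ => ?_⟩
  obtain ⟨c, hc⟩ := hlarge F hFE hregular
  exact (hsmall c).not_gt hc
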